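/- Fix γ ∈ (1,2) and Φ_ℓ, Φ_r ∈ ℝ. There exist constants C > 0 and m > 0 (depending only on γ, Φ_ℓ and Φ_r) such that for every integer n ≥ 2 and all smooth compactly supported f, g : ℝ^{Λ_n} → ℝ, the sector condition ( ∫ f (−𝓛_n g) dμ_ss^n )² ≤ C n^m ( ∫ f (−𝓛_n f) dμ_ss^n ) ( ∫ g (−𝓛_n g) dμ_ss^n ) holds; in particular the constant in the sector condition is polynomial in n. -/

import Mathlib

open MeasureTheory Filter ENNReal NNReal

noncomputable section

/-- The normalizing constant `c_γ = (∑_{z∈ℤ, z≠0} |z|^{-(1+γ)})⁻¹`. -/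
def cGamma (γ : ℝ) : ℝ := (∑' z : ℤ, if z = 0 then (0:ℝ) else |(z : ℝ)| ^ (-(1 + γ)))⁻¹

/-- The long-range kernel `p(z) = c_γ |z|^{-(1+γ)}` for `z ≠ 0`, `p(0) = 0`. -/
def pker (γ : ℝ) (z : ℝ) : ℝ := if z = 0 then 0 else cGamma γ * |z| ^ (-(1 + γ))

/-- The discrete lattice `Λ_n = {1, …, n−1}`. -/
abbrev Lam (n : ℕ) : Finset ℕ := Finset.Icc 1 (n - 1)

/-- The configuration space `ℝ^{Λ_n}`. -/
abbrev Conf (n : ℕ) := (↥(Lam n) → ℝ)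

/-- The partial derivative `∂_{φ(k)} f` (with value `0` for `k ∉ Λ_n`). -/
def pdN (n : ℕ) (k : ℕ) (f : Conf n → ℝ) (φ : Conf n) : ℝ :=
  if h : k ∈ Lam n then deriv (fun a => f (Function.update φ ⟨k, h⟩ a)) (φ ⟨k, h⟩) else 0

/-- The coordinate `φ(k)` (with value `0` for `k ∉ Λ_n`). -/
def coordN (n : ℕ) (k : ℕ) (φ : Conf n) : ℝ := if h : k ∈ Lam n then φ ⟨k, h⟩ else 0

/-- The bulk part of the Ginzburg–Landau generator. -/
def GLbulk (γ : ℝ) (n : ℕ) (f : Conf n → ℝ) (φ : Conf n) : ℝ :=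
  (1/2) * ∑ x ∈ Lam n, ∑ y ∈ Lam n, pker γ ((y : ℝ) - (x : ℝ)) *
    ((coordN n x φ - coordN n y φ) * (pdN n y f φ - pdN n x f φ)
      + (pdN n y (pdN n y f) φ - pdN n y (pdN n x f) φ
          - pdN n x (pdN n y f) φ + pdN n x (pdN n x f) φ))

/-- The left boundary part of the Ginzburg–Landau generator. -/
def GLleft (Φl : ℝ) (n : ℕ) (f : Conf n → ℝ) (φ : Conf n) : ℝ :=
  pdN n 1 (pdN n 1 f) φ + (Φl - coordN n 1 φ) * pdN n 1 f φ

/-- The right boundary part of the Ginzburg–Landau generator. -/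
def GLright (Φr : ℝ) (n : ℕ) (f : Conf n → ℝ) (φ : Conf n) : ℝ :=
  pdN n (n - 1) (pdN n (n - 1) f) φ + (Φr - coordN n (n - 1) φ) * pdN n (n - 1) f φ

/-- The boundary-driven long-range Ginzburg–Landau generator
`𝓛_n = n^γ (𝓛^ℓ + 𝓛^r + 𝓛^{bulk})`. -/
def GLgen (γ Φl Φr : ℝ) (n : ℕ) (f : Conf n → ℝ) (φ : Conf n) : ℝ :=
  (n : ℝ) ^ γ * (GLleft Φl n f φ + GLright Φr n f φ + GLbulk γ n f φ)

/-- The Gaussian product measure on `ℝ^{Λ_n}` with unit variances and mean `m x` at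
coordinate `x`. -/
def gaussianProduct (n : ℕ) (m : ℕ → ℝ) : Measure (Conf n) :=
  Measure.pi fun x => ProbabilityTheory.gaussianReal (m (x : ℕ)) 1

/-- The discrete stationary equation for the profile `ψ` on `Λ_n = {1, …, n−1}`. -/
def IsDiscreteProfile (γ Φl Φr : ℝ) (n : ℕ) (ψ : ℕ → ℝ) : Prop :=
  ∀ x ∈ Lam n,
    (∑ y ∈ Lam n, pker γ ((y : ℝ) - (x : ℝ)) * (ψ y - ψ x))
      + (if x = 1 then Φl - ψ 1 else 0) + (if x = n - 1 then Φr - ψ (n - 1) else 0) = 0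

/-! The stationary equation of the profile `ψ`, summed against `∂g`, says that replacing `φ` by
`φ - ψ` and `Φ_ℓ`, `Φ_r` by `0` in the drifts leaves `𝓛_n g` unchanged. With these centred drifts,
`-𝓛_n` is a nonnegative combination of `∂ᵥ* ∂ᵥ` over the noise directions `v`, the adjoint being
taken in `L²(μ_ss)`. So `∫ f (-𝓛_n g) dμ_ss` is a symmetric nonnegative form, and the sector
condition is its Cauchy–Schwarz inequality, with the constant `1` for every `n`. -/

section Integral

variable {α ι : Type*} [MeasurableSpace α]

theorem sq_integral_mul_le {μ : Measure α} {f g : α → ℝ} (hf : MemLp f 2 μ) (hg : MemLp g 2 μ) :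
    (∫ x, f x * g x ∂μ) ^ 2 ≤ (∫ x, f x * f x ∂μ) * ∫ x, g x * g x ∂μ := by
  have inner_toLp {u v : α → ℝ} (hu : MemLp u 2 μ) (hv : MemLp v 2 μ) :
      inner ℝ (hu.toLp u) (hv.toLp v) = ∫ x, u x * v x ∂μ := by
    rw [L2.inner_def]
    refine integral_congr_ae ?_
    filter_upwards [hu.coeFn_toLp, hv.coeFn_toLp] with x hux hvx
    simp [hux, hvx, mul_comm]
  simpa only [inner_toLp, sq] using real_inner_mul_inner_self_le (hf.toLp f) (hg.toLp g)

theorem pi_withDensity_ofReal [Fintype ι] {X : ι → Type*} [∀ i, MeasurableSpace (X i)]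
    {μ : ∀ i, Measure (X i)} [∀ i, SigmaFinite (μ i)] {ρ : ∀ i, X i → ℝ}
    (hρ : ∀ i, Integrable (ρ i) (μ i)) (hρ_nonneg : ∀ i x, 0 ≤ ρ i x) :
    Measure.pi (fun i ↦ (μ i).withDensity fun x ↦ .ofReal (ρ i x)) =
      (Measure.pi μ).withDensity fun x ↦ .ofReal (∏ i, ρ i (x i)) := by
  refine Measure.pi_eq fun s hs ↦ ?_
  have hρs (i) : Integrable (ρ i) ((μ i).restrict (s i)) := (hρ i).restrict
  rw [withDensity_apply _ (.univ_pi hs), Measure.restrict_pi_pi,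
    ← ofReal_integral_eq_lintegral_ofReal (.fintype_prod_dep hρs)
      (ae_of_all _ fun x ↦ Finset.prod_nonneg fun i _ ↦ hρ_nonneg i (x i)),
    integral_fintype_prod_eq_prod,
    ENNReal.ofReal_prod_of_nonneg fun i _ ↦ integral_nonneg (hρ_nonneg i)]
  refine Finset.prod_congr rfl fun i _ ↦ ?_
  rw [withDensity_apply _ (hs i),
    ofReal_integral_eq_lintegral_ofReal (hρs i) (ae_of_all _ (hρ_nonneg i))]

end Integral

section Fderiv

variable {E : Type*} [NormedAddCommGroup E] [NormedSpace ℝ E]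

theorem continuous_fderiv_apply_const {f : E → ℝ} (hf : ContDiff ℝ 1 f) (v : E) :
    Continuous fun x ↦ fderiv ℝ f x v :=
  (hf.continuous_fderiv one_ne_zero).clm_apply continuous_const

theorem contDiff_fderiv_apply_const {f : E → ℝ} (hf : ContDiff ℝ 2 f) (v : E) :
    ContDiff ℝ 1 fun x ↦ fderiv ℝ f x v :=
  (hf.fderiv_right (m := 1) (by norm_num)).clm_apply contDiff_const

theorem fderiv_fderiv_apply_const {f : E → ℝ} (hf : ContDiff ℝ 2 f) (x u v : E) :
    fderiv ℝ (fun y ↦ fderiv ℝ f y v) x u = fderiv ℝ (fderiv ℝ f) x u v := by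
  have hf' : DifferentiableAt ℝ (fderiv ℝ f) x :=
    (hf.fderiv_right (m := 1) (by norm_num)).differentiable one_ne_zero x
  simp [fderiv_clm_apply hf' (differentiableAt_const v)]

theorem fderiv_mul_exp_neg_apply {h V : E → ℝ} {x : E}
    (hh : DifferentiableAt ℝ h x) (hV : DifferentiableAt ℝ V x) (v : E) :
    fderiv ℝ (fun y ↦ h y * Real.exp (-V y)) x v =
      (fderiv ℝ h x v - fderiv ℝ V x v * h x) * Real.exp (-V x) := by
  have hexp : HasFDerivAt (fun y ↦ Real.exp (-V y)) (Real.exp (-V x) • -fderiv ℝ V x) x :=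
    hV.hasFDerivAt.neg.exp
  rw [(hh.hasFDerivAt.fun_mul hexp).fderiv]
  simp only [add_apply, smul_apply, neg_apply, smul_eq_mul]
  ring

end Fderiv

section Generator

variable {E κ : Type*} [NormedAddCommGroup E] [NormedSpace ℝ E]

/-- The generator `∂²ᵥ - (∂ᵥ V) ∂ᵥ` of the Langevin dynamics of the potential `V` in the direction
`v`. -/
def langevinGen (V : E → ℝ) (v : E) (f : E → ℝ) (x : E) : ℝ :=
  fderiv ℝ (fderiv ℝ f) x v v - fderiv ℝ V x v * fderiv ℝ f x v

/-- The generator of the diffusion which superposes, at the rates `w k`, the Langevin dynamics of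
the potential `V` in the directions `v k`. -/
def diffusionGen [Fintype κ] (V : E → ℝ) (w : κ → ℝ) (v : κ → E) (f : E → ℝ) (x : E) : ℝ :=
  ∑ k, w k * langevinGen V (v k) f x

theorem continuous_langevinGen {V f : E → ℝ} (hV : ContDiff ℝ 1 V) (v : E) (hf : ContDiff ℝ 2 f) :
    Continuous (langevinGen V v f) := by
  have hf'' := continuous_fderiv_apply_const (contDiff_fderiv_apply_const hf v) v
  simp only [fderiv_fderiv_apply_const hf] at hf''
  exact hf''.sub ((continuous_fderiv_apply_const hV v).mul
    (continuous_fderiv_apply_const (hf.of_le one_le_two) v))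

end Generator

section GibbsMeasure

/-- The (unnormalised) Gibbs measure `e^{-V} μ` of a potential `V`. -/
def gibbsMeasure {X : Type*} [MeasurableSpace X] (μ : Measure X) (V : X → ℝ) : Measure X :=
  μ.withDensity fun x ↦ .ofReal (Real.exp (-V x))

variable {X : Type*} [TopologicalSpace X] [MeasurableSpace X] [OpensMeasurableSpace X]
  {μ : Measure X} {V : X → ℝ}

theorem integral_gibbsMeasure (hV : Continuous V) (f : X → ℝ) :
    ∫ x, f x ∂gibbsMeasure μ V = ∫ x, f x * Real.exp (-V x) ∂μ := by
  rw [gibbsMeasure, integral_withDensity_eq_integral_toReal_smul (by fun_prop) (by simp)]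
  simp [Real.exp_nonneg, mul_comm]

theorem isLocallyFiniteMeasure_gibbsMeasure [IsLocallyFiniteMeasure μ] (hV : Continuous V) :
    IsLocallyFiniteMeasure (gibbsMeasure μ V) :=
  .withDensity_ofReal (by fun_prop)

end GibbsMeasure

section Diffusion

variable {E κ : Type*} [NormedAddCommGroup E] [NormedSpace ℝ E] [MeasurableSpace E]

/-- The Dirichlet form `∑ₖ wₖ ∫ ∂_{vₖ} f ∂_{vₖ} g dν`. -/
def dirichletForm [Fintype κ] (ν : Measure E) (w : κ → ℝ) (v : κ → E) (f g : E → ℝ) : ℝ :=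
  ∑ k, w k * ∫ x, fderiv ℝ f x (v k) * fderiv ℝ g x (v k) ∂ν

variable [BorelSpace E] {μ : Measure E} {V f g h : E → ℝ}

theorem sq_dirichletForm_le [Fintype κ] {ν : Measure E} [IsFiniteMeasureOnCompacts ν] {w : κ → ℝ}
    (hw : ∀ k, 0 ≤ w k) (v : κ → E) (hf : ContDiff ℝ 1 f) (hfc : HasCompactSupport f)
    (hg : ContDiff ℝ 1 g) (hgc : HasCompactSupport g) :
    dirichletForm ν w v f g ^ 2 ≤ dirichletForm ν w v f f * dirichletForm ν w v g g := by
  have memLp {u : E → ℝ} (hu : ContDiff ℝ 1 u) (huc : HasCompactSupport u) (k : κ) :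
      MemLp (fun x ↦ fderiv ℝ u x (v k)) 2 ν :=
    (continuous_fderiv_apply_const hu _).memLp_of_hasCompactSupport (huc.fderiv_apply ℝ _)
  have nonneg (u : E → ℝ) (k : κ) :
      0 ≤ w k * ∫ x, fderiv ℝ u x (v k) * fderiv ℝ u x (v k) ∂ν :=
    mul_nonneg (hw k) (integral_nonneg fun x ↦ mul_self_nonneg _)
  refine Finset.sum_sq_le_sum_mul_sum_of_sq_le_mul _ (fun k _ ↦ nonneg f k) (fun k _ ↦ nonneg g k)
    fun k _ ↦ ?_
  rw [mul_pow, mul_mul_mul_comm, ← sq]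
  gcongr
  exact sq_integral_mul_le (memLp hf hfc k) (memLp hg hgc k)

variable [FiniteDimensional ℝ E] [μ.IsAddHaarMeasure]

theorem integral_mul_fderiv_sub_gibbsMeasure (hV : ContDiff ℝ 1 V) (v : E)
    (hf : ContDiff ℝ 1 f) (hfc : HasCompactSupport f) (hh : ContDiff ℝ 1 h) :
    ∫ x, f x * (fderiv ℝ V x v * h x - fderiv ℝ h x v) ∂gibbsMeasure μ V =
      ∫ x, fderiv ℝ f x v * h x ∂gibbsMeasure μ V := by
  have hhV : ContDiff ℝ 1 fun x ↦ h x * Real.exp (-V x) := hh.mul hV.neg.exp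
  have ibp := integral_mul_fderiv_eq_neg_fderiv_mul_of_integrable (μ := μ) (v := v)
    (((continuous_fderiv_apply_const hf v).mul hhV.continuous).integrable_of_hasCompactSupport
      (hfc.fderiv_apply ℝ v).mul_right)
    ((hf.continuous.mul (continuous_fderiv_apply_const hhV v)).integrable_of_hasCompactSupport
      hfc.mul_right)
    ((hf.continuous.mul hhV.continuous).integrable_of_hasCompactSupport hfc.mul_right)
    (fun x _ ↦ hf.differentiable one_ne_zero x) (fun x _ ↦ hhV.differentiable one_ne_zero x)
  rw [integral_gibbsMeasure hV.continuous, integral_gibbsMeasure hV.continuous]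
  calc ∫ x, f x * (fderiv ℝ V x v * h x - fderiv ℝ h x v) * Real.exp (-V x) ∂μ
    _ = -∫ x, f x * fderiv ℝ (fun y ↦ h y * Real.exp (-V y)) x v ∂μ := by
      rw [← integral_neg]
      congr with x
      rw [fderiv_mul_exp_neg_apply (hh.differentiable one_ne_zero x)
        (hV.differentiable one_ne_zero x)]
      ring
    _ = ∫ x, fderiv ℝ f x v * h x * Real.exp (-V x) ∂μ := by
      simp only [ibp, neg_neg, mul_assoc]

theorem integral_mul_neg_langevinGen (hV : ContDiff ℝ 1 V) (v : E)
    (hf : ContDiff ℝ 1 f) (hfc : HasCompactSupport f) (hg : ContDiff ℝ 2 g) :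
    ∫ x, f x * -langevinGen V v g x ∂gibbsMeasure μ V =
      ∫ x, fderiv ℝ f x v * fderiv ℝ g x v ∂gibbsMeasure μ V := by
  simpa only [langevinGen, neg_sub, fderiv_fderiv_apply_const hg] using
    integral_mul_fderiv_sub_gibbsMeasure hV v hf hfc (contDiff_fderiv_apply_const hg v)

theorem integral_mul_neg_diffusionGen [Fintype κ] (hV : ContDiff ℝ 1 V) (w : κ → ℝ) (v : κ → E)
    (hf : ContDiff ℝ 1 f) (hfc : HasCompactSupport f) (hg : ContDiff ℝ 2 g) :
    ∫ x, f x * -diffusionGen V w v g x ∂gibbsMeasure μ V =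
      dirichletForm (gibbsMeasure μ V) w v f g := by
  have := isLocallyFiniteMeasure_gibbsMeasure (μ := μ) hV.continuous
  have integrable (k : κ) :
      Integrable (fun x ↦ f x * -langevinGen V (v k) g x) (gibbsMeasure μ V) :=
    (hf.continuous.mul (continuous_langevinGen hV (v k) hg).neg).integrable_of_hasCompactSupport
      hfc.mul_right
  calc ∫ x, f x * -diffusionGen V w v g x ∂gibbsMeasure μ V
    _ = ∫ x, ∑ k, w k * (f x * -langevinGen V (v k) g x) ∂gibbsMeasure μ V := by
      simp only [diffusionGen, ← Finset.sum_neg_distrib, Finset.mul_sum, ← mul_neg, mul_left_comm]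
    _ = dirichletForm (gibbsMeasure μ V) w v f g := by
      rw [integral_finsetSum _ fun k _ ↦ (integrable k).const_mul _]
      simp only [integral_const_mul, integral_mul_neg_langevinGen hV _ hf hfc hg, dirichletForm]

theorem sq_integral_mul_neg_diffusionGen_le [Fintype κ] (hV : ContDiff ℝ 1 V) {w : κ → ℝ}
    (hw : ∀ k, 0 ≤ w k) (v : κ → E) (hf : ContDiff ℝ 2 f) (hfc : HasCompactSupport f)
    (hg : ContDiff ℝ 2 g) (hgc : HasCompactSupport g) :
    (∫ x, f x * -diffusionGen V w v g x ∂gibbsMeasure μ V) ^ 2 ≤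
      (∫ x, f x * -diffusionGen V w v f x ∂gibbsMeasure μ V) *
        ∫ x, g x * -diffusionGen V w v g x ∂gibbsMeasure μ V := by
  have := isLocallyFiniteMeasure_gibbsMeasure (μ := μ) hV.continuous
  have hf' : ContDiff ℝ 1 f := hf.of_le one_le_two
  have hg' : ContDiff ℝ 1 g := hg.of_le one_le_two
  simp only [integral_mul_neg_diffusionGen hV w v hf' hfc hf,
    integral_mul_neg_diffusionGen hV w v hf' hfc hg,
    integral_mul_neg_diffusionGen hV w v hg' hgc hg]
  exact sq_dirichletForm_le hw v hf' hfc hg' hgc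

end Diffusion

section Gaussian

open ProbabilityTheory

variable {ι : Type*} [Fintype ι] (m : ι → ℝ) (σ : ι → ℝ≥0)

/-- The potential whose Gibbs measure is the product of the Gaussian laws with means `m i` and
variances `σ i`. -/
def gaussianPotential (φ : ι → ℝ) : ℝ :=
  ∑ i, ((φ i - m i) ^ 2 / (2 * σ i) + Real.log √(2 * Real.pi * σ i))

theorem contDiff_gaussianPotential {k : WithTop ℕ∞} : ContDiff ℝ k (gaussianPotential m σ) := by
  unfold gaussianPotential
  fun_prop

theorem fderiv_gaussianPotential_apply (φ v : ι → ℝ) :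
    fderiv ℝ (gaussianPotential m σ) φ v = ∑ i, (φ i - m i) / σ i * v i := by
  have hasDerivAt (i : ι) (t : ℝ) : HasDerivAt
      (fun t ↦ (t - m i) ^ 2 / (2 * σ i) + Real.log √(2 * Real.pi * σ i)) ((t - m i) / σ i) t := by
    refine ((((hasDerivAt_id' t).sub_const (m i)).fun_pow 2).div_const (2 * σ i : ℝ)).add_const
      (Real.log √(2 * Real.pi * σ i)) |>.congr_deriv ?_
    simp [mul_div_mul_left]
  have hasFDerivAt : HasFDerivAt (gaussianPotential m σ)
      (∑ i, ((φ i - m i) / σ i : ℝ) • .proj (R := ℝ) (φ := fun _ ↦ ℝ) i) φ :=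
    .fun_sum fun i _ ↦
      ((hasDerivAt i (φ i)).comp_hasFDerivAt φ (hasFDerivAt_apply (𝕜 := ℝ) i φ) :)
  simp [hasFDerivAt.fderiv]

theorem exp_neg_gaussianPotential (hσ : ∀ i, σ i ≠ 0) (φ : ι → ℝ) :
    Real.exp (-gaussianPotential m σ φ) = ∏ i, gaussianPDFReal (m i) (σ i) (φ i) := by
  rw [gaussianPotential, ← Finset.sum_neg_distrib, Real.exp_sum]
  refine Finset.prod_congr rfl fun i _ ↦ ?_
  have hσi : 0 < σ i := pos_iff_ne_zero.2 (hσ i)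
  have : 0 < √(2 * Real.pi * σ i) := by positivity
  rw [neg_add, Real.exp_add, Real.exp_neg (Real.log _), Real.exp_log this, gaussianPDFReal,
    mul_comm, neg_div]

theorem pi_gaussianReal_eq_gibbsMeasure (hσ : ∀ i, σ i ≠ 0) :
    Measure.pi (fun i ↦ gaussianReal (m i) (σ i)) =
      gibbsMeasure volume (gaussianPotential m σ) := by
  simp only [gaussianReal_of_var_ne_zero _ (hσ _), gaussianPDF_def, gibbsMeasure,
    exp_neg_gaussianPotential m σ hσ]
  exact pi_withDensity_ofReal (fun i ↦ integrable_gaussianPDFReal _ _)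
    fun i ↦ gaussianPDFReal_nonneg _ _

end Gaussian

theorem sum_sum_mul_sub_mul_sub {α R : Type*} [CommRing R] (s : Finset α) {c : α → α → R}
    (hc : ∀ x y, c x y = c y x) (u d : α → R) :
    ∑ x ∈ s, ∑ y ∈ s, c x y * ((u x - u y) * (d y - d x)) =
      2 * ∑ x ∈ s, (∑ y ∈ s, c x y * (u y - u x)) * d x := by
  calc ∑ x ∈ s, ∑ y ∈ s, c x y * ((u x - u y) * (d y - d x))
    _ = ∑ x ∈ s, ∑ y ∈ s, c x y * (u y - u x) * d x +
        ∑ x ∈ s, ∑ y ∈ s, c y x * (u x - u y) * d y := by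
      simp only [← Finset.sum_add_distrib]
      refine Finset.sum_congr rfl fun x _ ↦ Finset.sum_congr rfl fun y _ ↦ ?_
      rw [hc y x]
      ring
    _ = 2 * ∑ x ∈ s, (∑ y ∈ s, c x y * (u y - u x)) * d x := by
      rw [Finset.sum_comm (f := fun x y ↦ c y x * (u x - u y) * d y), ← two_mul]
      simp only [Finset.sum_mul]

section GinzburgLandau

variable {γ Φl Φr : ℝ} {n : ℕ} {ψ : ℕ → ℝ} {f g : Conf n → ℝ}

theorem pker_neg (γ z : ℝ) : pker γ (-z) = pker γ z := by
  simp [pker]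

theorem pker_nonneg (γ z : ℝ) : 0 ≤ pker γ z := by
  have : 0 ≤ cGamma γ := inv_nonneg.2 (tsum_nonneg fun z ↦ by split_ifs <;> positivity)
  unfold pker
  split_ifs <;> positivity

/-- The unit vector of `ℝ^{Λ_n}` at the site `k`; as for `pdN` and `coordN`, it is `0` for
`k ∉ Λ_n`. -/
def siteVec (n k : ℕ) : Conf n := if h : k ∈ Lam n then Pi.single ⟨k, h⟩ 1 else 0

theorem pdN_eq_fderiv (hf : Differentiable ℝ f) (k : ℕ) (φ : Conf n) :
    pdN n k f φ = fderiv ℝ f φ (siteVec n k) := by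
  unfold pdN siteVec
  split_ifs with hk
  · have hfφ : HasFDerivAt f (fderiv ℝ f φ) (Function.update φ ⟨k, hk⟩ (φ ⟨k, hk⟩)) := by
      simpa using (hf φ).hasFDerivAt
    exact (hfφ.comp_hasDerivAt _ (hasDerivAt_update φ ⟨k, hk⟩ _)).deriv
  · simp

theorem pdN_pdN_eq_fderiv (hf : ContDiff ℝ 2 f) (j k : ℕ) (φ : Conf n) :
    pdN n j (pdN n k f) φ = fderiv ℝ (fderiv ℝ f) φ (siteVec n j) (siteVec n k) := by
  rw [funext (pdN_eq_fderiv (hf.differentiable two_ne_zero) k),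
    pdN_eq_fderiv ((contDiff_fderiv_apply_const hf _).differentiable one_ne_zero),
    fderiv_fderiv_apply_const hf]

/-- The potential of the Gaussian product measure with unit variances and mean `ψ`. -/
def profilePotential (n : ℕ) (ψ : ℕ → ℝ) : Conf n → ℝ :=
  gaussianPotential (fun x : Lam n ↦ ψ x) 1

theorem gaussianProduct_eq_gibbsMeasure (n : ℕ) (ψ : ℕ → ℝ) :
    gaussianProduct n ψ = gibbsMeasure volume (profilePotential n ψ) :=
  pi_gaussianReal_eq_gibbsMeasure _ _ fun _ ↦ one_ne_zero

theorem fderiv_profilePotential_siteVec {k : ℕ} (hk : k ∈ Lam n) (ψ : ℕ → ℝ) (φ : Conf n) :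
    fderiv ℝ (profilePotential n ψ) φ (siteVec n k) = coordN n k φ - ψ k := by
  rw [profilePotential, fderiv_gaussianPotential_apply, siteVec, coordN, dif_pos hk, dif_pos hk]
  simp [Pi.single_apply]

/-- The directions in which the noise of the Ginzburg–Landau dynamics acts: the two boundary sites,
and the bonds `(x, y)` with direction `e_y - e_x`. -/
def noiseDirection (n : ℕ) : Fin 2 ⊕ Lam n × Lam n → Conf n :=
  Sum.elim ![siteVec n 1, siteVec n (n - 1)] fun b ↦ siteVec n b.2 - siteVec n b.1

/-- The rates of the noise of the Ginzburg–Landau dynamics in the directions `noiseDirection`. -/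
def noiseRate (γ : ℝ) (n : ℕ) : Fin 2 ⊕ Lam n × Lam n → ℝ :=
  Sum.elim (fun _ ↦ (n : ℝ) ^ γ) fun b ↦ (n : ℝ) ^ γ * (1 / 2 * pker γ ((b.2 : ℕ) - (b.1 : ℕ)))

theorem noiseRate_nonneg (γ : ℝ) (n : ℕ) (k : Fin 2 ⊕ Lam n × Lam n) : 0 ≤ noiseRate γ n k := by
  rcases k with _ | b
  · exact Real.rpow_nonneg n.cast_nonneg γ
  · have := pker_nonneg γ ((b.2 : ℕ) - (b.1 : ℕ))
    simp only [noiseRate, Sum.elim_inr]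
    positivity

theorem one_mem_Lam (hn : 2 ≤ n) : 1 ∈ Lam n :=
  Finset.mem_Icc.2 ⟨le_rfl, by omega⟩

theorem sub_one_mem_Lam (hn : 2 ≤ n) : n - 1 ∈ Lam n :=
  Finset.mem_Icc.2 ⟨by omega, le_rfl⟩

theorem IsDiscreteProfile.half_sum_sum_pker_mul (hψ : IsDiscreteProfile γ Φl Φr n ψ) (hn : 2 ≤ n)
    (d : ℕ → ℝ) :
    1 / 2 * ∑ x ∈ Lam n, ∑ y ∈ Lam n,
        pker γ ((y : ℝ) - (x : ℝ)) * ((ψ x - ψ y) * (d y - d x)) =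
      -((Φl - ψ 1) * d 1) - (Φr - ψ (n - 1)) * d (n - 1) := by
  have pker_comm (x y : ℕ) : pker γ ((y : ℝ) - (x : ℝ)) = pker γ ((x : ℝ) - (y : ℝ)) := by
    rw [← pker_neg, neg_sub]
  have tested : ∑ x ∈ Lam n, ((∑ y ∈ Lam n, pker γ ((y : ℝ) - (x : ℝ)) * (ψ y - ψ x)) +
      (if x = 1 then Φl - ψ 1 else 0) + (if x = n - 1 then Φr - ψ (n - 1) else 0)) * d x = 0 :=
    Finset.sum_eq_zero fun x hx ↦ by rw [hψ x hx, zero_mul]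
  simp only [add_mul, Finset.sum_add_distrib, ite_mul, zero_mul, Finset.sum_ite_eq',
    one_mem_Lam hn, sub_one_mem_Lam hn, if_true] at tested
  rw [sum_sum_mul_sub_mul_sub _ pker_comm]
  linarith

theorem pdN_pdN_add_drift_mul_pdN {k : ℕ} (hk : k ∈ Lam n) (hg : ContDiff ℝ 2 g) (Φ : ℝ)
    (ψ : ℕ → ℝ) (φ : Conf n) :
    pdN n k (pdN n k g) φ + (Φ - coordN n k φ) * pdN n k g φ =
      langevinGen (profilePotential n ψ) (siteVec n k) g φ + (Φ - ψ k) * pdN n k g φ := by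
  rw [langevinGen, pdN_pdN_eq_fderiv hg, pdN_eq_fderiv (hg.differentiable two_ne_zero),
    fderiv_profilePotential_siteVec hk]
  ring

theorem GLbulk_eq_sum_langevinGen_add (γ : ℝ) (ψ : ℕ → ℝ) (hg : ContDiff ℝ 2 g) (φ : Conf n) :
    GLbulk γ n g φ =
      1 / 2 * ∑ x : Lam n, ∑ y : Lam n, pker γ ((y : ℕ) - (x : ℕ)) *
        langevinGen (profilePotential n ψ) (siteVec n y - siteVec n x) g φ +
      1 / 2 * ∑ x ∈ Lam n, ∑ y ∈ Lam n, pker γ ((y : ℝ) - (x : ℝ)) *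
        ((ψ x - ψ y) * (pdN n y g φ - pdN n x g φ)) := by
  simp only [GLbulk, ← Finset.sum_coe_sort (Lam n), ← mul_add, ← Finset.sum_add_distrib]
  congr! 4 with x _ y _
  simp only [langevinGen, pdN_pdN_eq_fderiv hg, pdN_eq_fderiv (hg.differentiable two_ne_zero),
    map_sub, sub_apply, fderiv_profilePotential_siteVec x.2, fderiv_profilePotential_siteVec y.2]
  ring

theorem GLgen_eq_diffusionGen (hn : 2 ≤ n) (hψ : IsDiscreteProfile γ Φl Φr n ψ)
    (hg : ContDiff ℝ 2 g) :
    GLgen γ Φl Φr n g =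
      diffusionGen (profilePotential n ψ) (noiseRate γ n) (noiseDirection n) g := by
  ext φ
  rw [GLgen, GLleft, GLright, pdN_pdN_add_drift_mul_pdN (one_mem_Lam hn) hg Φl ψ,
    pdN_pdN_add_drift_mul_pdN (sub_one_mem_Lam hn) hg Φr ψ, GLbulk_eq_sum_langevinGen_add γ ψ hg,
    hψ.half_sum_sum_pker_mul hn]
  simp only [diffusionGen, noiseRate, noiseDirection, Fintype.sum_sum_type, Fin.sum_univ_two,
    Fintype.sum_prod_type, Sum.elim_inl, Sum.elim_inr, Matrix.cons_val_zero, Matrix.cons_val_one,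
    mul_assoc, ← Finset.mul_sum]
  ring

theorem sector_condition_general (hn : 2 ≤ n) (hψ : IsDiscreteProfile γ Φl Φr n ψ)
    (hf : ContDiff ℝ 2 f) (hfc : HasCompactSupport f) (hg : ContDiff ℝ 2 g)
    (hgc : HasCompactSupport g) :
    (∫ φ, f φ * (-(GLgen γ Φl Φr n g φ)) ∂(gaussianProduct n ψ)) ^ 2 ≤
      (∫ φ, f φ * (-(GLgen γ Φl Φr n f φ)) ∂(gaussianProduct n ψ)) *
        ∫ φ, g φ * (-(GLgen γ Φl Φr n g φ)) ∂(gaussianProduct n ψ) := by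
  rw [GLgen_eq_diffusionGen hn hψ hf, GLgen_eq_diffusionGen hn hψ hg,
    gaussianProduct_eq_gibbsMeasure]
  exact sq_integral_mul_neg_diffusionGen_le (contDiff_gaussianPotential _ _) (noiseRate_nonneg γ n)
    _ hf hfc hg hgc

end GinzburgLandau

/-- Sector condition for the boundary-driven long-range Ginzburg–Landau
generator with respect to its non-equilibrium steady state, with a constant that is
polynomial in `n`. -/
theorem sector_condition
    (γ : ℝ) (hγ : γ ∈ Set.Ioo (1:ℝ) 2) (Φl Φr : ℝ) :
    ∃ C : ℝ, 0 < C ∧ ∃ m : ℝ, 0 < m ∧ ∀ n : ℕ, 2 ≤ n →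
      ∀ ψ : ℕ → ℝ, IsDiscreteProfile γ Φl Φr n ψ →
      ∀ f g : Conf n → ℝ, ContDiff ℝ (⊤ : ℕ∞) f → HasCompactSupport f →
        ContDiff ℝ (⊤ : ℕ∞) g → HasCompactSupport g →
        (∫ φ, f φ * (-(GLgen γ Φl Φr n g φ)) ∂(gaussianProduct n ψ)) ^ 2
          ≤ C * (n : ℝ) ^ m *
              (∫ φ, f φ * (-(GLgen γ Φl Φr n f φ)) ∂(gaussianProduct n ψ)) *
              (∫ φ, g φ * (-(GLgen γ Φl Φr n g φ)) ∂(gaussianProduct n ψ)) := by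
  refine ⟨1, one_pos, 1, one_pos, fun n hn ψ hψ f g hf hfc hg hgc ↦ ?_⟩
  have le := sector_condition_general hn hψ (contDiff_infty.1 hf 2) hfc (contDiff_infty.1 hg 2) hgc
  rw [one_mul, Real.rpow_one, mul_assoc]
  exact le.trans (le_mul_of_one_le_left ((sq_nonneg _).trans le) (mod_cast one_le_two.trans hn))
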